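/- Let A be an arrangement of 45 lines in ℙ²(ℂ) such that every singular point of A has multiplicity 3, 4 or 5, t_3(A) = 120, t_4(A) = 45, t_5(A) = 36, and every line of A contains exactly 8 triple points, exactly 4 quadruple points, and exactly 4 quintuple points of A (these are exactly the properties of the Wiman arrangement of 45 lines). Then there exists a supersolvable line arrangement B with A ⊆ B and |B| ≤ 170; in particular extSS(A) ≤ 125. -/

import Mathlib

/-!
Coning off a quintuple point proves the bound. Fix a point `P` of multiplicity `5` and let `B` be
`A` together with all lines `PQ`, where `Q` is a singular point of `A` not already joined to `P`
by a line of `A`. Every line of `B` missing `P` is in `A`, so a singular point of `B` either lies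
on a line of `B` through `P`, or is a singular point of `A` and hence is joined to `P` in `B`: the
point `P` is modular (`exists_supersolvable_extension`).

For the size of `B`, note that `A` has `120 + 45 + 36 = 201` singular points and that each of the
five lines of `A` through `P` carries `8 + 4 + 4 = 16` of them, one being `P`. These lines meet
only in `P`, so `1 + 5 * 15 = 76` singular points are already joined to `P`
(`card_unjoined_add_le`), and at most `201 - 76 = 125` lines are added.
-/

open scoped Classical

noncomputable section

/-- The projective plane `ℙ²(ℂ)`, used both for points and for lines
(a line being recorded by its coefficient vector, up to scalar). -/
abbrev P2 := Projectivization ℂ (Fin 3 → ℂ)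

lemma vne₀ {a b c : ℂ} (h : a ≠ 0) : ![a, b, c] ≠ 0 :=
  fun hh => h (by simpa using congrFun hh 0)

lemma vne₁ {a b c : ℂ} (h : b ≠ 0) : ![a, b, c] ≠ 0 :=
  fun hh => h (by simpa using congrFun hh 1)

lemma vne₂ {a b c : ℂ} (h : c ≠ 0) : ![a, b, c] ≠ 0 :=
  fun hh => h (by simpa using congrFun hh 2)

/-- The point (or line) of `ℙ²(ℂ)` with homogeneous coordinates `[a : b : c]`. -/
def mkP (a b c : ℂ) (h : ![a, b, c] ≠ 0) : P2 := Projectivization.mk ℂ ![a, b, c] h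

/-- Incidence: the point `p` lies on the line `L`
(the line being given by its coefficient vector, up to scalar). -/
def Incid (p L : P2) : Prop := ∑ i : Fin 3, p.rep i * L.rep i = 0

/-- The multiplicity of a point `p` with respect to the line arrangement `A`:
the number of lines of `A` passing through `p`. -/
def mult (A : Finset P2) (p : P2) : ℕ := (A.filter fun L => Incid p L).card

/-- `p` is a singular point of the arrangement `A`: it lies on at least two of its lines. -/
def IsSing (A : Finset P2) (p : P2) : Prop := 2 ≤ mult A p

/-- The set of singular points of `A`. -/
def Sing (A : Finset P2) : Set P2 := {p | IsSing A p}

/-- `tr A r` is the number of singular points of `A` of multiplicity exactly `r`. -/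
def tr (A : Finset P2) (r : ℕ) : ℕ := {p : P2 | mult A p = r}.ncard

/-- `P` is a modular point of `A`: it is a singular point, and for every singular point
`Q ≠ P` the line through `P` and `Q` belongs to `A`. -/
def IsModular (A : Finset P2) (P : P2) : Prop :=
  IsSing A P ∧ ∀ Q : P2, IsSing A Q → Q ≠ P → ∃ L ∈ A, Incid P L ∧ Incid Q L

/-- A line arrangement in `ℙ²(ℂ)` is supersolvable iff it has a modular point. -/
def Supersolvable (A : Finset P2) : Prop := ∃ P : P2, IsModular A P

/-- The extension-to-supersolvability number: the least `k` such that `A` is contained in a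
supersolvable arrangement with `|A| + k` lines. -/
def extSS (A : Finset P2) : ℕ :=
  sInf {k : ℕ | ∃ B : Finset P2, A ⊆ B ∧ Supersolvable B ∧ B.card = A.card + k}

open Projectivization Configuration.ofField

lemma incid_iff_orthogonal (p L : P2) : Incid p L ↔ p.orthogonal L := by
  conv_rhs => rw [← p.mk_rep, ← L.mk_rep]
  exact (orthogonal_mk p.rep_nonzero L.rep_nonzero).symm

lemma eq_or_eq_of_incid {p q L M : P2} (hpL : Incid p L) (hqL : Incid q L)
    (hpM : Incid p M) (hqM : Incid q M) : p = q ∨ L = M := by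
  rw [incid_iff_orthogonal] at *
  exact eq_or_eq_of_orthogonal hpL hqL hpM hqM

/-- The points of `S` that no line of `A` joins to `P`; below, `S` is the set of singular points of
`A`. -/
def unjoined (A S : Finset P2) (P : P2) : Finset P2 :=
  S.filter fun Q => ¬ ∃ L ∈ A, Incid P L ∧ Incid Q L

/-- Adding to `A` the lines from a singular point `P` to all singular points not yet joined to it
makes `P` modular. -/
lemma exists_supersolvable_extension (A S : Finset P2) (hS : ∀ p, p ∈ S ↔ IsSing A p)
    (P : P2) (hP : IsSing A P) :
    ∃ B : Finset P2, A ⊆ B ∧ Supersolvable B ∧ B.card ≤ A.card + (unjoined A S P).card := by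
  have hne : ∀ Q ∈ unjoined A S P, P ≠ Q := by
    rintro Q hQ rfl
    have hpos : 0 < mult A P := lt_of_lt_of_le Nat.zero_lt_two hP
    obtain ⟨L, hL⟩ := Finset.card_pos.1 hpos
    rw [Finset.mem_filter] at hL
    exact (Finset.mem_filter.1 hQ).2 ⟨L, hL.1, hL.2, hL.2⟩
  refine ⟨A ∪ (unjoined A S P).image (cross P), Finset.subset_union_left, ⟨P, ?_, ?_⟩,
    (Finset.card_union_le _ _).trans (Nat.add_le_add_left Finset.card_image_le _)⟩
  · exact le_trans hP (Finset.card_le_card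
      (Finset.filter_subset_filter _ Finset.subset_union_left))
  · intro Q hQ hQP
    by_contra hcon
    -- No line of the extension joins `P` and `Q`, so the lines through `Q` all come from `A`.
    have hsub : (A ∪ (unjoined A S P).image (cross P)).filter (fun L => Incid Q L)
        ⊆ A.filter (fun L => Incid Q L) := by
      intro L hL
      rw [Finset.mem_filter] at hL ⊢
      refine ⟨?_, hL.2⟩
      rcases Finset.mem_union.1 hL.1 with h | h
      · exact h
      · obtain ⟨R, hR, rfl⟩ := Finset.mem_image.1 h
        exact absurd ⟨_, hL.1, (incid_iff_orthogonal _ _).2 (orthogonal_cross_left (hne R hR)),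
          hL.2⟩ hcon
    have hQA : IsSing A Q := le_trans hQ (Finset.card_le_card hsub)
    by_cases hj : ∃ L ∈ A, Incid P L ∧ Incid Q L
    · obtain ⟨L, hL, h⟩ := hj
      exact hcon ⟨L, Finset.mem_union_left _ hL, h⟩
    · have hmem : Q ∈ unjoined A S P := Finset.mem_filter.2 ⟨(hS Q).2 hQA, hj⟩
      exact hcon ⟨cross P Q, Finset.mem_union_right _ (Finset.mem_image_of_mem _ hmem),
        (incid_iff_orthogonal _ _).2 (orthogonal_cross_left hQP.symm),
        (incid_iff_orthogonal _ _).2 (orthogonal_cross_right hQP.symm)⟩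

/-- If every line of `A` carries `n + 1` points of `S`, then the lines of `A` through `P` account
for at least `mult A P * n + 1` points of `S`, since they meet only in `P`. -/
lemma card_unjoined_add_le (A S : Finset P2) (P : P2) (hPS : P ∈ S) (hP : IsSing A P) (n : ℕ)
    (hn : ∀ L ∈ A, (S.filter fun p => Incid p L).card = n + 1) :
    (unjoined A S P).card + (mult A P * n + 1) ≤ S.card := by
  have hcard : ((A.filter fun L => Incid P L).biUnion
      fun L => (S.filter fun p => Incid p L).erase P).card = mult A P * n := by
    rw [Finset.card_biUnion, Finset.sum_const_nat (m := n)]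
    · rfl
    · intro L hL
      rw [Finset.mem_filter] at hL
      rw [Finset.card_erase_of_mem (Finset.mem_filter.2 ⟨hPS, hL.2⟩), hn L hL.1]
      rfl
    · intro L hL M hM hLM
      rw [Finset.mem_coe, Finset.mem_filter] at hL hM
      refine Finset.disjoint_left.2 fun q hqL hqM => ?_
      simp only [Finset.mem_erase, Finset.mem_filter] at hqL hqM
      rcases eq_or_eq_of_incid hL.2 hqL.2.2 hM.2 hqM.2.2 with h | h
      · exact hqL.1 h.symm
      · exact hLM h
  have hsub : insert P ((A.filter fun L => Incid P L).biUnion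
      fun L => (S.filter fun p => Incid p L).erase P)
      ⊆ S.filter fun Q => ∃ L ∈ A, Incid P L ∧ Incid Q L := by
    intro q hq
    rw [Finset.mem_filter]
    rcases Finset.mem_insert.1 hq with rfl | hq
    · have hpos : 0 < mult A q := lt_of_lt_of_le Nat.zero_lt_two hP
      obtain ⟨L, hL⟩ := Finset.card_pos.1 hpos
      rw [Finset.mem_filter] at hL
      exact ⟨hPS, L, hL.1, hL.2, hL.2⟩
    · simp only [Finset.mem_biUnion, Finset.mem_filter, Finset.mem_erase] at hq
      obtain ⟨L, ⟨hLA, hPL⟩, -, hqS, hqL⟩ := hq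
      exact ⟨hqS, L, hLA, hPL, hqL⟩
  have hle := Finset.card_le_card hsub
  rw [Finset.card_insert_of_notMem (by simp), hcard] at hle
  have hsplit := Finset.card_filter_add_card_filter_not (s := S)
    (fun Q => ∃ L ∈ A, Incid P L ∧ Incid Q L)
  unfold unjoined
  omega

/-- If `A` is an arrangement of `45` lines in `ℙ²(ℂ)` whose singular points
all have multiplicity `3`, `4` or `5`, with `t₃ = 120`, `t₄ = 45`, `t₅ = 36`, and with every
line of `A` containing exactly `8` triple points, exactly `4` quadruple points and exactly `4`
quintuple points (the properties of the Wiman arrangement), then there is a supersolvable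
arrangement `B ⊇ A` with `|B| ≤ 170`; in particular `extSS(A) ≤ 125`. -/
theorem stmt_10 (A : Finset P2) (hcard : A.card = 45)
    (hmults : ∀ p : P2, IsSing A p → mult A p = 3 ∨ mult A p = 4 ∨ mult A p = 5)
    (ht3 : tr A 3 = 120) (ht4 : tr A 4 = 45) (ht5 : tr A 5 = 36)
    (hline : ∀ L ∈ A, ({p : P2 | mult A p = 3 ∧ Incid p L}).ncard = 8 ∧
      ({p : P2 | mult A p = 4 ∧ Incid p L}).ncard = 4 ∧
      ({p : P2 | mult A p = 5 ∧ Incid p L}).ncard = 4) :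
    (∃ B : Finset P2, A ⊆ B ∧ Supersolvable B ∧ B.card ≤ 170) ∧ extSS A ≤ 125 := by
  have hf3 : {p : P2 | mult A p = 3}.Finite :=
    Set.finite_of_ncard_ne_zero (by unfold tr at ht3; omega)
  have hf4 : {p : P2 | mult A p = 4}.Finite :=
    Set.finite_of_ncard_ne_zero (by unfold tr at ht4; omega)
  have hf5 : {p : P2 | mult A p = 5}.Finite :=
    Set.finite_of_ncard_ne_zero (by unfold tr at ht5; omega)
  -- Counting the singular points with a given property by their multiplicity.
  have hcount : ∀ q : P2 → Prop, ((hf3.toFinset ∪ hf4.toFinset ∪ hf5.toFinset).filter q).card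
      = {p : P2 | mult A p = 3 ∧ q p}.ncard + {p : P2 | mult A p = 4 ∧ q p}.ncard
        + {p : P2 | mult A p = 5 ∧ q p}.ncard := by
    intro q
    have key : ∀ (r : ℕ) (h : {p : P2 | mult A p = r}.Finite),
        {p : P2 | mult A p = r ∧ q p}.ncard = (h.toFinset.filter q).card := by
      intro r h
      rw [← Set.ncard_coe_finset]
      congr 1
      ext p
      simp
    rw [key 3 hf3, key 4 hf4, key 5 hf5, Finset.filter_union, Finset.filter_union,
      Finset.card_union_of_disjoint, Finset.card_union_of_disjoint]
    · refine Finset.disjoint_left.2 fun p h1 h2 => ?_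
      simp at h1 h2
      omega
    · refine Finset.disjoint_left.2 fun p h1 h2 => ?_
      simp at h1 h2
      omega
  set S := hf3.toFinset ∪ hf4.toFinset ∪ hf5.toFinset with hSdef
  have hS : ∀ p, p ∈ S ↔ IsSing A p := by
    intro p
    have h := hmults p
    simp only [hSdef, Finset.mem_union, Set.Finite.mem_toFinset, Set.mem_ofPred_eq]
    unfold IsSing at *
    omega
  have hScard : S.card = 201 := by
    have h := hcount fun _ => True
    simp only [Finset.filter_true, and_true] at h
    unfold tr at ht3 ht4 ht5
    omega
  have hSline : ∀ L ∈ A, (S.filter fun p => Incid p L).card = 15 + 1 := by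
    intro L hL
    obtain ⟨h3, h4, h5⟩ := hline L hL
    rw [hcount, h3, h4, h5]
  obtain ⟨P, hP5⟩ : {p : P2 | mult A p = 5}.Nonempty :=
    Set.nonempty_of_ncard_ne_zero (by unfold tr at ht5; omega)
  replace hP5 : mult A P = 5 := hP5
  have hP : IsSing A P := by unfold IsSing; omega
  have hle := card_unjoined_add_le A S P ((hS P).2 hP) hP 15 hSline
  obtain ⟨B, hAB, hB, hBcard⟩ := exists_supersolvable_extension A S hS P hP
  rw [hP5] at hle
  have hB170 : B.card ≤ 170 := by omega
  refine ⟨⟨B, hAB, hB, hB170⟩, ?_⟩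
  have hmono := Finset.card_le_card hAB
  have hinf : extSS A ≤ B.card - A.card := Nat.sInf_le ⟨B, hAB, hB, by omega⟩
  omega
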